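/- For m ≥ 1 and n > 2m+1, the graphs obtained by taking the parallel connection of the wheel-like graph G_m with the n-cycle C_n along the edge {0,i}, for m ≤ i ≤ 2m-1, are pairwise non-isomorphic; specifically, the resulting graph has longest cycle of length (n-1)+i. -/

import Mathlib

/-- The graph `G_m` on vertex set `ℤ/(2m)` with edges `{i, i+1}` for `1 ≤ i < 2m - 1`
and `{0, i}` for `1 ≤ i < 2m`. -/
def Gm (m : ℕ) : SimpleGraph (ZMod (2 * m)) :=
  SimpleGraph.fromRel fun s t =>
    (∃ i : ℕ, 1 ≤ i ∧ i < 2 * m - 1 ∧ s = (i : ZMod (2 * m)) ∧ t = (i : ZMod (2 * m)) + 1) ∨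
    (∃ i : ℕ, 1 ≤ i ∧ i < 2 * m ∧ s = 0 ∧ t = (i : ZMod (2 * m)))

/-- The parallel connection of `G_m` with the `n`-cycle along the edge `{0, i}`:
the edge is kept, and a path of length `n - 1` (with `n - 2` new internal vertices)
is attached between the vertices `0` and `i`. -/
def parConn (m n i : ℕ) : SimpleGraph (ZMod (2 * m) ⊕ Fin (n - 2)) :=
  SimpleGraph.fromRel fun s t =>
    (∃ a b, s = Sum.inl a ∧ t = Sum.inl b ∧ (Gm m).Adj a b) ∨
    (∃ j : Fin (n - 2), (j : ℕ) = 0 ∧ s = Sum.inl 0 ∧ t = Sum.inr j) ∨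
    (∃ j k : Fin (n - 2), (k : ℕ) = (j : ℕ) + 1 ∧ s = Sum.inr j ∧ t = Sum.inr k) ∨
    (∃ j : Fin (n - 2), (j : ℕ) = n - 3 ∧ s = Sum.inr j ∧ t = Sum.inl (i : ZMod (2 * m)))

open SimpleGraph in
theorem exists_walk_support_eq_map_range {V : Type*} {G : SimpleGraph V} (f : ℕ → V) (L : ℕ)
    (h : ∀ k < L, G.Adj (f k) (f (k + 1))) :
    ∃ p : G.Walk (f 0) (f L), p.support = (List.range (L + 1)).map f := by
  induction L with
  | zero => exact ⟨Walk.nil, by simp⟩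
  | succ L ih =>
    obtain ⟨p, hp⟩ := ih fun k hk => h k (by omega)
    refine ⟨p.concat (h L (by omega)), ?_⟩
    rw [Walk.support_concat, hp, List.range_succ (n := L + 1)]
    simp

/-- An injective closed sequence of `L + 1 ≥ 3` vertices is a cycle. -/
theorem exists_isCycle_of_injOn {V : Type*} {G : SimpleGraph V} (f : ℕ → V) (L : ℕ) (hL : 2 ≤ L)
    (h : ∀ k < L, G.Adj (f k) (f (k + 1))) (hclose : G.Adj (f L) (f 0))
    (hinj : ∀ a ≤ L, ∀ b ≤ L, f a = f b → a = b) :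
    ∃ c : G.Walk (f L) (f L), c.IsCycle ∧ c.length = L + 1 := by
  obtain ⟨p, hp⟩ := exists_walk_support_eq_map_range f L h
  have hlen : p.length = L := by
    have := p.length_support
    rw [hp] at this
    simpa using this.symm
  have hpath : p.IsPath := by
    rw [SimpleGraph.Walk.isPath_def, hp]
    refine List.Nodup.map_on ?_ List.nodup_range
    intro a ha b hb
    exact hinj a (by simpa [Nat.lt_succ_iff] using ha) b (by simpa [Nat.lt_succ_iff] using hb)
  refine ⟨SimpleGraph.Walk.cons hclose p, ?_, by simp [hlen]⟩
  rw [SimpleGraph.Walk.cons_isCycle_iff]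
  refine ⟨hpath, fun hmem => ?_⟩
  rw [Sym2.eq_swap] at hmem
  have := hpath.length_eq_one_of_mem_edges hmem
  omega

/-- A chain of adjacent vertices avoiding `u` and `v` stays within one colour class. -/
theorem exists_forall_color_eq_of_isChain {V α : Type*} {G : SimpleGraph V} {u v : V} {f : V → α}
    (hf : ∀ a b, G.Adj a b → a ≠ u → b ≠ u → a ≠ v → b ≠ v → f a = f b)
    {l : List V} (hl : l.IsChain G.Adj) (hu : u ∉ l) (hv : v ∉ l) (d : α) :
    ∃ k, ∀ x ∈ l, f x = k := by
  induction l with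
  | nil => exact ⟨d, by simp⟩
  | cons a l ih =>
    cases l with
    | nil => exact ⟨f a, by simp⟩
    | cons b l =>
      rw [List.isChain_cons_cons] at hl
      obtain ⟨k, hk⟩ := ih hl.2 (by grind) (by grind)
      refine ⟨k, ?_⟩
      have := hf a b hl.1 (by grind) (by grind) (by grind) (by grind)
      have := hk b (by simp)
      grind

/-- If the colouring `f` is constant on the components of `G - {u, v}`, then a cycle of `G` meets,
outside of `u` and `v`, at most two colour classes. -/
theorem SimpleGraph.Walk.IsCycle.exists_two_colors {V α : Type*} [DecidableEq V]
    {G : SimpleGraph V} {u v w : V} {f : V → α}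
    (hf : ∀ a b, G.Adj a b → a ≠ u → b ≠ u → a ≠ v → b ≠ v → f a = f b)
    {c : G.Walk w w} (hc : c.IsCycle) :
    ∃ k k', ∀ x ∈ c.support, x = u ∨ x = v ∨ f x = k ∨ f x = k' := by
  have key : ∀ l : List V, l.IsChain G.Adj → l.Nodup → u ∉ l →
      ∃ k k', ∀ x ∈ l, x = u ∨ x = v ∨ f x = k ∨ f x = k' := by
    intro l hl hnd hu
    by_cases hv : v ∈ l
    · obtain ⟨s, t, rfl⟩ := List.append_of_mem hv
      obtain ⟨k, hk⟩ := exists_forall_color_eq_of_isChain hf hl.left_of_append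
        (by grind) (by grind) (f u)
      obtain ⟨k', hk'⟩ := exists_forall_color_eq_of_isChain hf hl.right_of_append.tail
        (by grind) (by grind) (f u)
      exact ⟨k, k', by grind⟩
    · obtain ⟨k, hk⟩ := exists_forall_color_eq_of_isChain hf hl hu hv (f u)
      exact ⟨k, k, by grind⟩
  by_cases hu : u ∈ c.support
  · obtain ⟨k, k', h⟩ := key (c.rotate u hu).support.tail.dropLast
      (c.rotate u hu).isChain_adj_support.tail.dropLast
      ((hc.rotate hu).support_nodup.sublist (List.dropLast_sublist _)) (by
        have hnd := (hc.rotate hu).support_nodup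
        have hnil := (hc.rotate hu).not_nil
        have hne : (c.rotate u hu).support.tail ≠ [] :=
          List.ne_nil_of_mem (SimpleGraph.Walk.end_mem_tail_support hnil)
        have hlast : (c.rotate u hu).support.tail.getLast hne = u := by
          rw [List.getLast_tail, SimpleGraph.Walk.getLast_support]
        rw [← List.dropLast_append_getLast hne, hlast] at hnd
        intro hmem
        exact (List.nodup_append.1 hnd).2.2 u hmem u (by simp) rfl)
    refine ⟨k, k', fun x hx => ?_⟩
    rw [← SimpleGraph.Walk.mem_support_rotate_iff c u hu, ← SimpleGraph.Walk.cons_tail_support,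
      List.mem_cons] at hx
    rcases hx with hx | hx
    · exact Or.inl hx
    · have hne := List.ne_nil_of_mem hx
      have hlast : (c.rotate u hu).support.tail.getLast hne = u := by
        rw [List.getLast_tail, SimpleGraph.Walk.getLast_support]
      rw [← List.dropLast_append_getLast hne, hlast] at hx
      grind
  · obtain ⟨k, k', h⟩ := key c.support.tail c.isChain_adj_support.tail hc.support_nodup
      (fun h => hu (List.mem_of_mem_tail h))
    refine ⟨k, k', fun x hx => ?_⟩
    rw [← SimpleGraph.Walk.cons_tail_support, List.mem_cons] at hx
    rcases hx with rfl | hx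
    · exact h _ (SimpleGraph.Walk.end_mem_tail_support hc.not_nil)
    · exact h x hx

theorem SimpleGraph.Walk.IsCycle.length_add_le_card {V : Type*} [Fintype V] [DecidableEq V]
    {G : SimpleGraph V} {w : V} {c : G.Walk w w} (hc : c.IsCycle) {t : ℕ} (g : Fin t → V)
    (hg : Function.Injective g) (havoid : ∀ x, g x ∉ c.support) :
    c.length + t ≤ Fintype.card V := by
  have hcard : c.support.tail.toFinset.card = c.length := by
    rw [List.toFinset_card_of_nodup hc.support_nodup]
    simp
  have hdisj : Disjoint c.support.tail.toFinset (Finset.univ.image g) := by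
    rw [Finset.disjoint_left]
    intro x hx hx'
    obtain ⟨y, -, rfl⟩ := Finset.mem_image.1 hx'
    exact havoid y (List.mem_of_mem_tail (List.mem_toFinset.1 hx))
  have := Finset.card_le_univ (c.support.tail.toFinset ∪ Finset.univ.image g)
  rw [Finset.card_union_of_disjoint hdisj, hcard, Finset.card_image_of_injective _ hg] at this
  simpa using this

theorem Gm_adj_imp {m : ℕ} (hm : 1 ≤ m) {a b : ZMod (2 * m)} (h : (Gm m).Adj a b) :
    a = 0 ∨ b = 0 ∨ a.val + 1 = b.val ∨ b.val + 1 = a.val := by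
  have : NeZero (2 * m) := ⟨by omega⟩
  have hval : ∀ i : ℕ, i < 2 * m - 1 → (i : ZMod (2 * m)).val + 1 = ((i : ZMod (2 * m)) + 1).val := by
    intro i hi
    have : ((i : ZMod (2 * m)) + 1) = ((i + 1 : ℕ) : ZMod (2 * m)) := by push_cast; rfl
    rw [this, ZMod.val_cast_of_lt (by omega), ZMod.val_cast_of_lt (by omega)]
  rw [Gm, SimpleGraph.fromRel_adj] at h
  rcases h with ⟨-, (⟨i, -, hi, rfl, rfl⟩ | ⟨i, -, -, rfl, -⟩) |
    (⟨i, -, hi, rfl, rfl⟩ | ⟨i, -, -, rfl, -⟩)⟩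
  · exact Or.inr (Or.inr (Or.inl (hval i hi)))
  · exact Or.inl rfl
  · exact Or.inr (Or.inr (Or.inr (hval i hi)))
  · exact Or.inr (Or.inl rfl)

theorem natCast_zmod_inj {N a b : ℕ} (ha : a < N) (hb : b < N)
    (h : (a : ZMod N) = (b : ZMod N)) : a = b := by
  rw [← ZMod.val_cast_of_lt ha, ← ZMod.val_cast_of_lt hb, h]

theorem Gm_adj_natCast {m a : ℕ} (ha : a + 1 < 2 * m) :
    (Gm m).Adj (a : ZMod (2 * m)) ((a + 1 : ℕ) : ZMod (2 * m)) := by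
  rw [Gm, SimpleGraph.fromRel_adj]
  refine ⟨fun h => ?_, Or.inl ?_⟩
  · have := natCast_zmod_inj (by omega) ha h
    omega
  · rcases Nat.eq_zero_or_pos a with rfl | hpos
    · exact Or.inr ⟨1, le_rfl, by omega, by simp, by simp⟩
    · exact Or.inl ⟨a, hpos, by omega, rfl, by push_cast; rfl⟩

theorem parConn_exists_isCycle {m n i : ℕ} (hn : 2 * m + 1 < n) (hi : 1 ≤ i)
    (hi' : i ≤ 2 * m - 1) :
    ∃ (v : ZMod (2 * m) ⊕ Fin (n - 2)) (c : (parConn m n i).Walk v v),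
      c.IsCycle ∧ c.length = (n - 1) + i := by
  let f : ℕ → ZMod (2 * m) ⊕ Fin (n - 2) := fun k =>
    if k ≤ i then Sum.inl (k : ZMod (2 * m))
    else Sum.inr ⟨n - 3 - (k - i - 1), by omega⟩
  have hl : ∀ k, k ≤ i → f k = Sum.inl (k : ZMod (2 * m)) := fun k hk => by simp [f, hk]
  have hr : ∀ k, i < k → f k = Sum.inr ⟨n - 3 - (k - i - 1), by omega⟩ := fun k hk => by
    simp [f, Nat.not_le.2 hk]
  obtain ⟨c, hc, hlen⟩ := exists_isCycle_of_injOn (G := parConn m n i) f (n - 2 + i) (by omega)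
    (by
      intro k hk
      rcases lt_trichotomy k i with h | rfl | h
      · rw [hl k h.le, hl (k + 1) h, parConn, SimpleGraph.fromRel_adj]
        have hadj := Gm_adj_natCast (m := m) (a := k) (by omega)
        exact ⟨fun h => hadj.ne (Sum.inl_injective h), Or.inl (Or.inl ⟨_, _, rfl, rfl, hadj⟩)⟩
      · rw [hl k le_rfl, hr (k + 1) (by omega), parConn, SimpleGraph.fromRel_adj]
        refine ⟨by simp, Or.inr (Or.inr (Or.inr (Or.inr ⟨_, ?_, rfl, rfl⟩)))⟩
        simp
      · rw [hr k h, hr (k + 1) (by omega), parConn, SimpleGraph.fromRel_adj]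
        refine ⟨?_, Or.inr (Or.inr (Or.inr (Or.inl ⟨_, _, ?_, rfl, rfl⟩)))⟩
        · simp only [ne_eq, Sum.inr.injEq, Fin.mk.injEq]
          omega
        · simp only
          omega)
    (by
      rw [hr _ (by omega), hl 0 (by omega), parConn, SimpleGraph.fromRel_adj]
      refine ⟨by simp, Or.inr (Or.inr (Or.inl ⟨_, ?_, by simp, rfl⟩))⟩
      simp only
      omega)
    (by
      intro a ha b hb h
      rcases le_or_gt a i with h1 | h1 <;> rcases le_or_gt b i with h2 | h2
      · rw [hl a h1, hl b h2, Sum.inl.injEq] at h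
        exact natCast_zmod_inj (by omega) (by omega) h
      · rw [hl a h1, hr b h2] at h
        simp at h
      · rw [hr a h1, hl b h2] at h
        simp at h
      · rw [hr a h1, hr b h2, Sum.inr.injEq, Fin.mk.injEq] at h
        omega)
  exact ⟨_, c, hc, by omega⟩

/-- Colours the components of `parConn m n i - {0, i}`. -/
def parConnColor (m n i : ℕ) : ZMod (2 * m) ⊕ Fin (n - 2) → Fin 3 :=
  Sum.elim (fun z => if z.val < i then 0 else 1) fun _ => 2

theorem parConnColor_eq_of_adj {m n i : ℕ} (hm : 1 ≤ m)
    (a b : ZMod (2 * m) ⊕ Fin (n - 2)) (hab : (parConn m n i).Adj a b)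
    (ha : a ≠ Sum.inl 0) (hb : b ≠ Sum.inl 0)
    (ha' : a ≠ Sum.inl (i : ZMod (2 * m))) (hb' : b ≠ Sum.inl (i : ZMod (2 * m))) :
    parConnColor m n i a = parConnColor m n i b := by
  have : NeZero (2 * m) := ⟨by omega⟩
  have hGm : ∀ x y : ZMod (2 * m), (Gm m).Adj x y → x ≠ 0 → y ≠ 0 → x ≠ i → y ≠ i →
      parConnColor m n i (Sum.inl x) = parConnColor m n i (Sum.inl y) := by
    have hne : ∀ x : ZMod (2 * m), x ≠ i → x.val ≠ i := fun x hx h => hx (by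
      rw [← h, ZMod.natCast_zmod_val])
    intro x y hxy hx hy hx' hy'
    have h1 := hne x hx'
    have h2 := hne y hy'
    have h3 := Gm_adj_imp hm hxy
    simp only [hx, hy, false_or] at h3
    have : x.val < i ↔ y.val < i := by omega
    simp [parConnColor, this]
  rw [parConn, SimpleGraph.fromRel_adj] at hab
  rcases hab with ⟨-, (⟨x, y, rfl, rfl, h⟩ | ⟨j, -, rfl, rfl⟩ | ⟨j, k, -, rfl, rfl⟩ |
    ⟨j, -, rfl, rfl⟩) | (⟨x, y, rfl, rfl, h⟩ | ⟨j, -, rfl, rfl⟩ | ⟨j, k, -, rfl, rfl⟩ |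
    ⟨j, -, rfl, rfl⟩)⟩
  · exact hGm x y h (by simpa using ha) (by simpa using hb) (by simpa using ha') (by simpa using hb')
  · simp at ha
  · rfl
  · simp at hb'
  · exact hGm y x h.symm (by simpa using ha) (by simpa using hb) (by simpa using ha')
      (by simpa using hb')
  · simp at hb
  · rfl
  · simp at ha'

theorem parConn_length_le {m n i : ℕ} (hm : 1 ≤ m) (hn : 2 * m + 1 < n) (hi : m ≤ i)
    (hi' : i ≤ 2 * m - 1) {v : ZMod (2 * m) ⊕ Fin (n - 2)} {c : (parConn m n i).Walk v v}
    (hc : c.IsCycle) : c.length ≤ (n - 1) + i := by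
  classical
  have : NeZero (2 * m) := ⟨by omega⟩
  obtain ⟨k, k', hkk'⟩ := hc.exists_two_colors (parConnColor_eq_of_adj hm)
  have hclass : ∀ e : Fin 3, ∃ g : Fin (2 * m - 1 - i) → ZMod (2 * m) ⊕ Fin (n - 2),
      Function.Injective g ∧ ∀ x, g x ≠ Sum.inl 0 ∧ g x ≠ Sum.inl (i : ZMod (2 * m)) ∧
        parConnColor m n i (g x) = e := by
    have hnat : ∀ s : ℕ, 1 ≤ s → s + (2 * m - 1 - i) ≤ 2 * m →
        (s + (2 * m - 1 - i) ≤ i ∨ i < s) → ∀ e : Fin 3, (e = if s < i then 0 else 1) →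
        ∃ g : Fin (2 * m - 1 - i) → ZMod (2 * m) ⊕ Fin (n - 2),
          Function.Injective g ∧ ∀ x, g x ≠ Sum.inl 0 ∧ g x ≠ Sum.inl (i : ZMod (2 * m)) ∧
            parConnColor m n i (g x) = e := by
      intro s hs hs' hsi e he
      refine ⟨fun x => Sum.inl ((s + x : ℕ) : ZMod (2 * m)), fun x y hxy => ?_, fun x => ?_⟩
      · have := natCast_zmod_inj (by omega) (by omega) (Sum.inl_injective hxy)
        exact Fin.ext (by omega)
      · refine ⟨fun h => ?_, fun h => ?_, ?_⟩
        · have := natCast_zmod_inj (b := 0) (by omega) (by omega)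
            ((Sum.inl_injective h).trans Nat.cast_zero.symm)
          omega
        · have := natCast_zmod_inj (by omega) (by omega) (Sum.inl_injective h)
          omega
        · have hiff : s + (x : ℕ) < i ↔ s < i := by omega
          simp only [parConnColor, Sum.elim_inl]
          rw [ZMod.val_cast_of_lt (by omega), he]
          simp only [hiff]
    intro e
    fin_cases e
    · rcases Nat.lt_or_ge 1 i with h | h
      · exact hnat 1 le_rfl (by omega) (by omega) _ (by simp [h])
      · have h0 : IsEmpty (Fin (2 * m - 1 - i)) := by
          rw [show 2 * m - 1 - i = 0 by omega]
          infer_instance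
        exact ⟨h0.elim, fun x => h0.elim x, fun x => h0.elim x⟩
    · exact hnat (i + 1) (by omega) (by omega) (by omega) _ (by simp)
    · refine ⟨fun x => Sum.inr (Fin.castLE (by omega) x), fun x y hxy => ?_, fun x => ?_⟩
      · exact Fin.castLE_injective _ (Sum.inr_injective hxy)
      · simp [parConnColor]
  obtain ⟨e, he, he'⟩ : ∃ e : Fin 3, e ≠ k ∧ e ≠ k' := by
    clear hkk' hclass
    revert k k'
    decide
  obtain ⟨g, hg, hge⟩ := hclass e
  have := hc.length_add_le_card g hg fun x hx => by
    obtain ⟨h1, h2, h3⟩ := hge x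
    rcases hkk' _ hx with h | h | h | h
    · exact h1 h
    · exact h2 h
    · exact he (h3.symm.trans h)
    · exact he' (h3.symm.trans h)
  rw [Fintype.card_sum, ZMod.card, Fintype.card_fin] at this
  omega

/-- For `m ≥ 1` and `n > 2m + 1`, the parallel connections of `G_m` with the `n`-cycle
along the edges `{0, i}` for `m ≤ i ≤ 2m - 1` have longest cycle of length `(n-1) + i`;
consequently they are pairwise non-isomorphic. -/
theorem parConn_longest_cycle_and_nonisomorphic (m n : ℕ) (hm : 1 ≤ m) (hn : 2 * m + 1 < n) :
    (∀ i : ℕ, m ≤ i → i ≤ 2 * m - 1 →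
      ((∃ (v : ZMod (2 * m) ⊕ Fin (n - 2)) (c : (parConn m n i).Walk v v),
          c.IsCycle ∧ c.length = (n - 1) + i) ∧
        ∀ (v : ZMod (2 * m) ⊕ Fin (n - 2)) (c : (parConn m n i).Walk v v),
          c.IsCycle → c.length ≤ (n - 1) + i)) ∧
    (∀ i j : ℕ, m ≤ i → i ≤ 2 * m - 1 → m ≤ j → j ≤ 2 * m - 1 → i ≠ j →
      IsEmpty ((parConn m n i) ≃g (parConn m n j))) := by
  refine ⟨fun i hi hi' => ⟨parConn_exists_isCycle hn (by omega) hi',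
    fun v c hc => parConn_length_le hm hn hi hi' hc⟩, ?_⟩
  have key : ∀ i j : ℕ, m ≤ i → i ≤ 2 * m - 1 → m ≤ j → j ≤ 2 * m - 1 →
      (parConn m n i ≃g parConn m n j) → i ≤ j := by
    intro i j hi hi' hj hj' e
    obtain ⟨v, c, hc, hlen⟩ := parConn_exists_isCycle (i := i) hn (by omega) hi'
    have := parConn_length_le hm hn hj hj' (hc.map (f := e.toHom) e.injective)
    rw [SimpleGraph.Walk.length_map] at this
    omega
  exact fun i j hi hi' hj hj' hij =>
    ⟨fun e => hij (le_antisymm (key i j hi hi' hj hj' e) (key j i hj hj' hi hi' e.symm))⟩
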